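/- Let λ_c(β) = sup_{c ∈ (e^{-2/β}, 1)} 4βc²(-ln c)(1 + (1/2)β ln c) for β > 0. Then λ_c(β)/β → 2/e as β → 0⁺. -/

import Mathlib

open Real Set Filter

/-- The critical heating parameter λ_c(β) for the voltage-controlled radial problem. -/
noncomputable def lambdaCrit (β : ℝ) : ℝ :=
  sSup ((fun c : ℝ => 4 * β * c ^ 2 * (-Real.log c) * (1 + β * Real.log c / 2)) ''
    Set.Ioo (Real.exp (-2 / β)) 1)

/-!
Expanding the product, `λ(c) = 2 β η(c²) - 2 (β c ln c)²` with `η(x) = -x ln x ≤ 1 / e`. Dropping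
the square gives `λ_c(β) ≤ 2 β / e` for every `β > 0`. The bound on `η` is attained at `x = 1 / e`,
that is at `c = e^{-1/2}`, where the square costs only a term of order `β²`; this `c` is admissible
as soon as `β < 4`, so `λ_c(β) ≥ (2 β / e) (1 - β / 4)`, and the limit follows by squeezing.
-/

lemma negMulLog_le_exp_neg_one {x : ℝ} (hx : 0 ≤ x) : negMulLog x ≤ exp (-1) := by
  obtain rfl | hx := hx.eq_or_lt
  · simpa only [negMulLog_zero] using (exp_pos (-1)).le
  · calc negMulLog x = -log x * exp (-(-log x)) := by
          rw [neg_neg, exp_log hx, negMulLog]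
          ring
      _ ≤ exp (-1) := mul_exp_neg_le_exp_neg_one (-log x)

/-- The heating parameter `λ(c)` whose supremum over the admissible `c` is `lambdaCrit β`. It is
defined for every real `c`; since `log c = log |c|` by convention, it is an even function of `c`. -/
noncomputable def heatingParam (β c : ℝ) : ℝ :=
  4 * β * c ^ 2 * (-log c) * (1 + β * log c / 2)

lemma heatingParam_eq_negMulLog_sub_sq (β c : ℝ) :
    heatingParam β c = 2 * β * negMulLog (c ^ 2) - 2 * (β * (c * log c)) ^ 2 := by
  simp only [heatingParam, negMulLog, log_pow, Nat.cast_ofNat]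
  ring

lemma heatingParam_le {β : ℝ} (hβ : 0 ≤ β) (c : ℝ) : heatingParam β c ≤ 2 / exp 1 * β :=
  calc heatingParam β c
      = 2 * β * negMulLog (c ^ 2) - 2 * (β * (c * log c)) ^ 2 :=
        heatingParam_eq_negMulLog_sub_sq β c
    _ ≤ 2 * β * negMulLog (c ^ 2) := sub_le_self _ (by positivity)
    _ ≤ 2 * β * exp (-1) := by
        gcongr
        exact negMulLog_le_exp_neg_one (sq_nonneg c)
    _ = 2 / exp 1 * β := by
        rw [exp_neg]
        ring

lemma heatingParam_exp_neg_half (β : ℝ) :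
    heatingParam β (exp (-1 / 2)) = 2 / exp 1 * (1 - β / 4) * β := by
  have hsq : exp (-1 / 2) ^ 2 = (exp 1)⁻¹ := by
    rw [← exp_nat_mul, ← exp_neg]
    norm_num
  simp only [heatingParam, hsq, log_exp]
  ring

lemma lambdaCrit_eq_sSup_heatingParam (β : ℝ) :
    lambdaCrit β = sSup (heatingParam β '' Ioo (exp (-2 / β)) 1) :=
  rfl

lemma bddAbove_image_heatingParam {β : ℝ} (hβ : 0 ≤ β) (s : Set ℝ) :
    BddAbove (heatingParam β '' s) :=
  ⟨2 / exp 1 * β, forall_mem_image.2 fun c _ => heatingParam_le hβ c⟩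

lemma heatingParam_le_lambdaCrit {β c : ℝ} (hβ : 0 ≤ β) (hc : c ∈ Ioo (exp (-2 / β)) 1) :
    heatingParam β c ≤ lambdaCrit β :=
  le_csSup (bddAbove_image_heatingParam hβ _) (mem_image_of_mem _ hc)

lemma lambdaCrit_le {β : ℝ} (hβ : 0 ≤ β) : lambdaCrit β ≤ 2 / exp 1 * β := by
  rw [lambdaCrit_eq_sSup_heatingParam]
  exact Real.sSup_le (forall_mem_image.2 fun c _ => heatingParam_le hβ c) (by positivity)

lemma exp_neg_half_mem_Ioo {β : ℝ} (hβ : 0 < β) (hβ4 : β < 4) :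
    exp (-1 / 2) ∈ Ioo (exp (-2 / β)) 1 := by
  refine ⟨exp_lt_exp.2 ?_, exp_lt_one_iff.2 (by norm_num)⟩
  rw [div_lt_iff₀ hβ]
  linarith

lemma le_lambdaCrit {β : ℝ} (hβ : 0 < β) (hβ4 : β < 4) :
    2 / exp 1 * (1 - β / 4) * β ≤ lambdaCrit β :=
  (heatingParam_exp_neg_half β).symm.trans_le
    (heatingParam_le_lambdaCrit hβ.le (exp_neg_half_mem_Ioo hβ hβ4))

/-- λ_c(β)/β → 2/e as β → 0⁺. -/
theorem lambdaCrit_small_beta :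
    Filter.Tendsto (fun β : ℝ => lambdaCrit β / β) (nhdsWithin 0 (Set.Ioi 0))
      (nhds (2 / Real.exp 1)) := by
  have tendsto_lower : Tendsto (fun β : ℝ => 2 / exp 1 * (1 - β / 4))
      (nhdsWithin 0 (Ioi 0)) (nhds (2 / exp 1)) :=
    tendsto_nhdsWithin_of_tendsto_nhds <|
      Continuous.tendsto' (by fun_prop) 0 (2 / exp 1) (by ring)
  refine tendsto_of_tendsto_of_tendsto_of_le_of_le' tendsto_lower tendsto_const_nhds ?_ ?_
  · filter_upwards [Ioo_mem_nhdsGT (zero_lt_four' ℝ)] with β ⟨hβ, hβ4⟩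
    exact (le_div_iff₀ hβ).2 (le_lambdaCrit hβ hβ4)
  · filter_upwards [self_mem_nhdsWithin] with β (hβ : 0 < β)
    exact (div_le_iff₀ hβ).2 (lambdaCrit_le hβ.le)
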